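/- Let G be the Green's function of (1 − Δ) on the 4-dimensional torus 𝕋⁴, i.e. the distributional solution of (1 − Δ)G = δ₀. Then G is continuous and strictly positive on 𝕋⁴ \ {0}, and sup_{x ∈ 𝕋⁴\{0}} | G(x) − 1/(4π²|x|²) − (1/(8π²)) log |x| | < ∞. -/

import Mathlib

open MeasureTheory Real

noncomputable section

/-- The Euclidean norm on `Fin 4 → ℝ` (we work with periodic functions on `ℝ⁴`
representing functions on the torus `𝕋⁴ = (ℝ/2πℤ)⁴`). -/
def enorm4 (x : Fin 4 → ℝ) : ℝ := Real.sqrt (∑ i, (x i) ^ 2)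

/-- A point of the lattice `(2πℤ)⁴`. -/
def lpt (k : Fin 4 → ℤ) : Fin 4 → ℝ := fun i => 2 * Real.pi * (k i)

/-- Geodesic distance of (the torus point represented by) `x` to `0`,
i.e. the Euclidean distance of `x` to the lattice `(2πℤ)⁴`. -/
def latDist (x : Fin 4 → ℝ) : ℝ := ⨅ k : Fin 4 → ℤ, enorm4 (x - lpt k)

/-- The set of points representing `𝕋⁴ \ {0}`. -/
def Sreg : Set (Fin 4 → ℝ) := {x | ∀ k : Fin 4 → ℤ, x ≠ lpt k}

/-- A fundamental domain `(-π, π]⁴` for the torus. -/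
def FD : Set (Fin 4 → ℝ) := {x | ∀ i, x i ∈ Set.Ioc (-Real.pi) Real.pi}

/-- `(2πℤ)⁴`-periodicity, i.e. `f` represents a function on `𝕋⁴`. -/
def Per (f : (Fin 4 → ℝ) → ℝ) : Prop :=
  ∀ (x : Fin 4 → ℝ) (k : Fin 4 → ℤ), f (x + lpt k) = f x

/-- The Laplacian of `φ`. -/
def lap (φ : (Fin 4 → ℝ) → ℝ) (x : Fin 4 → ℝ) : ℝ :=
  ∑ i, fderiv ℝ (fun y => fderiv ℝ φ y (Pi.single i 1)) x (Pi.single i 1)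

/-!
The resolvent kernel `∫₀^∞ e^(-t) p_t dt` of `ℝ⁴`, with `p_t` the heat kernel, has Fourier transform
`1 / (1 + |ξ|²)`, so its sum over the translates by `(2πℤ)⁴` has Fourier coefficients
`1 / (1 + |n|²)`. Testing the equation against `cos (n·x)` and `sin (n·x)` shows that every weak
solution has the same coefficients, and by Stone–Weierstrass an integrable function on the torus is
determined by them. Near `0` only the untranslated term of the lattice sum is singular, because the
kernel decays like `|x|⁻⁶`. That term is `(16π²)⁻¹ ∫₀^∞ t⁻² e^(-t - a/t) dt` with `a = |x|² / 4`;
replacing `e^(-t)` by `1` in the integral gives `1 / a`, and the difference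
`∫₀^∞ (1 - e^(-t)) t⁻² e^(-a/t) dt` is `-log a + O(1)`, since its integrand is comparable to `1 / t`
on `[a, 1]` only. Positivity holds termwise.
-/

open Set Filter Topology

/-! ### A Bessel integral -/

/-- The Bessel integral `∫₀^∞ t^(-ν) e^(-t - a/t) dt`, i.e. `2 a^((1-ν)/2) K_{ν-1}(2√a)` in terms of
the modified Bessel function `K`. It is the radial profile of the kernel of `(1 - Δ)⁻¹` on
`ℝ^(2ν)`; see `resolventKernel_eq_besselIntegral`. -/
def besselIntegral (ν a : ℝ) : ℝ := ∫ t in Ioi 0, t ^ (-ν) * exp (-t - a / t)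

section BesselIntegral

variable {ν a t : ℝ}

lemma exp_neg_le_factorial_div_pow (N : ℕ) (ha : 0 < a) : exp (-a) ≤ N.factorial / a ^ N := by
  rw [exp_neg, inv_le_comm₀ (exp_pos a) (by positivity), inv_div]
  exact pow_div_factorial_le_exp a ha.le N

lemma rpow_neg_mul_exp_le (N : ℕ) (ha : 0 < a) (ht : 0 < t) :
    t ^ (-ν) * exp (-t - a / t) ≤ N.factorial / a ^ N * (exp (-t) * t ^ (N - ν + 1 - 1)) := by
  calc t ^ (-ν) * exp (-t - a / t) = t ^ (-ν) * exp (-t) * exp (-(a / t)) := by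
        rw [mul_assoc, ← exp_add, sub_eq_add_neg]
    _ ≤ t ^ (-ν) * exp (-t) * (N.factorial / (a / t) ^ N) := by
        gcongr
        exact exp_neg_le_factorial_div_pow N (by positivity)
    _ = N.factorial / a ^ N * (exp (-t) * (t ^ (N : ℝ) * t ^ (-ν))) := by
        rw [rpow_natCast, div_pow]
        field_simp
    _ = _ := by rw [← rpow_add ht, add_sub_cancel_right, sub_eq_add_neg]

lemma measurable_rpow_neg_mul_exp (ν a : ℝ) :
    Measurable fun t : ℝ ↦ t ^ (-ν) * exp (-t - a / t) := by fun_prop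

lemma integrableOn_rpow_neg_mul_exp (ν : ℝ) (ha : 0 < a) :
    IntegrableOn (fun t ↦ t ^ (-ν) * exp (-t - a / t)) (Ioi 0) := by
  obtain ⟨N, hN⟩ := exists_nat_gt ν
  have hΓ := (GammaIntegral_convergent (s := N - ν + 1) (by linarith)).const_mul
    (N.factorial / a ^ N)
  refine hΓ.mono' (measurable_rpow_neg_mul_exp ν a).aestronglyMeasurable ?_
  filter_upwards [self_mem_ae_restrict measurableSet_Ioi] with t (ht : 0 < t)
  rw [norm_of_nonneg (by positivity)]
  exact rpow_neg_mul_exp_le N ha ht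

lemma besselIntegral_pos (ν : ℝ) (ha : 0 < a) : 0 < besselIntegral ν a := by
  have hpos : ∀ t ∈ Ioi (0 : ℝ), 0 < t ^ (-ν) * exp (-t - a / t) :=
    fun t (ht : 0 < t) ↦ by positivity
  rw [besselIntegral, setIntegral_pos_iff_support_of_nonneg_ae
    (ae_restrict_of_forall_mem measurableSet_Ioi fun t ht ↦ (hpos t ht).le)
    (integrableOn_rpow_neg_mul_exp ν ha),
    inter_eq_right.mpr (show Ioi (0 : ℝ) ⊆ Function.support _ from fun t ht ↦ (hpos t ht).ne'),
    volume_Ioi]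
  exact ENNReal.zero_lt_top

lemma besselIntegral_le (N : ℕ) (hN : ν < N + 1) (ha : 0 < a) :
    besselIntegral ν a ≤ N.factorial * Gamma (N - ν + 1) / a ^ N := by
  have hs : 0 < N - ν + 1 := by linarith
  calc besselIntegral ν a
      ≤ ∫ t in Ioi 0, N.factorial / a ^ N * (exp (-t) * t ^ (N - ν + 1 - 1)) :=
        setIntegral_mono_on (integrableOn_rpow_neg_mul_exp ν ha)
          ((GammaIntegral_convergent hs).const_mul _) measurableSet_Ioi
          fun t ht ↦ rpow_neg_mul_exp_le N ha ht
    _ = N.factorial * Gamma (N - ν + 1) / a ^ N := by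
        rw [integral_const_mul, ← Gamma_eq_integral hs, div_mul_eq_mul_div]

lemma continuousOn_besselIntegral (ν : ℝ) : ContinuousOn (besselIntegral ν) (Ioi 0) := by
  intro a₀ (ha₀ : 0 < a₀)
  have hcont : ContinuousOn (besselIntegral ν) (Ioi (a₀ / 2)) := by
    refine continuousOn_of_dominated
      (fun a _ ↦ (measurable_rpow_neg_mul_exp ν a).aestronglyMeasurable) ?_
      (integrableOn_rpow_neg_mul_exp ν (half_pos ha₀)) (.of_forall fun t ↦ by fun_prop)
    intro a (ha : a₀ / 2 < a)
    filter_upwards [self_mem_ae_restrict measurableSet_Ioi] with t (ht : 0 < t)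
    rw [norm_of_nonneg (by positivity)]
    gcongr
  exact (hcont.continuousAt (Ioi_mem_nhds (half_lt_self ha₀))).continuousWithinAt

lemma rpow_neg_mul_exp_neg_div_eq_comp_inv (ν a : ℝ) (ht : 0 < t) :
    t ^ (-ν) * exp (-(a / t)) =
      t ^ (-1 - 1 : ℝ) • ((t ^ (-1 : ℝ)) ^ (ν - 1 - 1) * exp (-(a * t ^ (-1 : ℝ)))) := by
  rw [← rpow_mul ht.le, smul_eq_mul, ← mul_assoc, ← rpow_add ht, rpow_neg_one, div_eq_mul_inv]
  ring_nf

lemma integrableOn_rpow_neg_mul_exp_neg_div (hν : 1 < ν) (ha : 0 < a) :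
    IntegrableOn (fun t ↦ t ^ (-ν) * exp (-(a / t))) (Ioi 0) := by
  have h : IntegrableOn (fun u ↦ u ^ (ν - 1 - 1) * exp (-(a * u))) (Ioi 0) := by
    simpa using integrableOn_rpow_mul_exp_neg_mul_rpow (s := ν - 1 - 1) (by linarith) one_pos ha
  exact ((integrableOn_Ioi_comp_rpow_iff' _ (neg_ne_zero.mpr one_ne_zero)).mpr h).congr_fun
    (fun t ht ↦ (rpow_neg_mul_exp_neg_div_eq_comp_inv ν a ht).symm) measurableSet_Ioi

lemma integral_rpow_neg_mul_exp_neg_div (hν : 1 < ν) (ha : 0 < a) :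
    ∫ t in Ioi 0, t ^ (-ν) * exp (-(a / t)) = (1 / a) ^ (ν - 1) * Gamma (ν - 1) := by
  rw [← integral_rpow_mul_exp_neg_mul_Ioi (sub_pos.mpr hν) ha,
    ← integral_comp_rpow_Ioi (fun u ↦ u ^ (ν - 1 - 1) * exp (-(a * u)))
      (neg_ne_zero.mpr one_ne_zero)]
  refine setIntegral_congr_fun measurableSet_Ioi fun t ht ↦ ?_
  simpa using rpow_neg_mul_exp_neg_div_eq_comp_inv ν a ht

/-- The integrand of `1 / a - besselIntegral 2 a`, which carries the logarithmic singularity of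
`besselIntegral 2` at `0`. -/
def besselDefect (a t : ℝ) : ℝ := (1 - exp (-t)) / t ^ 2 * exp (-(a / t))

lemma besselDefect_eq_sub (a : ℝ) (ht : 0 < t) :
    besselDefect a t = t ^ (-2 : ℝ) * exp (-(a / t)) - t ^ (-2 : ℝ) * exp (-t - a / t) := by
  rw [besselDefect, sub_eq_add_neg (-t), exp_add, rpow_neg ht.le, rpow_two]
  ring

lemma integrableOn_besselDefect (ha : 0 < a) : IntegrableOn (besselDefect a) (Ioi 0) :=
  ((integrableOn_rpow_neg_mul_exp_neg_div one_lt_two ha).sub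
    (integrableOn_rpow_neg_mul_exp 2 ha)).congr_fun
    (fun _ ht ↦ (besselDefect_eq_sub a ht).symm) measurableSet_Ioi

lemma integral_besselDefect (ha : 0 < a) :
    ∫ t in Ioi 0, besselDefect a t = 1 / a - besselIntegral 2 a := by
  rw [setIntegral_congr_fun measurableSet_Ioi fun t ht ↦ besselDefect_eq_sub a ht,
    integral_sub (integrableOn_rpow_neg_mul_exp_neg_div one_lt_two ha)
      (integrableOn_rpow_neg_mul_exp 2 ha),
    integral_rpow_neg_mul_exp_neg_div one_lt_two ha, besselIntegral]
  norm_num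

lemma besselDefect_nonneg (a : ℝ) (ht : 0 < t) : 0 ≤ besselDefect a t := by
  have : 0 ≤ 1 - exp (-t) := by simpa using ht.le
  unfold besselDefect
  positivity

lemma besselDefect_le_inv (ha : 0 ≤ a) (ht : 0 < t) : besselDefect a t ≤ t⁻¹ := by
  calc besselDefect a t ≤ t / t ^ 2 * 1 := by
        unfold besselDefect
        gcongr
        · linarith [one_sub_le_exp_neg t]
        · exact exp_le_one_iff.mpr (by simpa using by positivity)
    _ = t⁻¹ := by field_simp

lemma besselDefect_le_rpow (ha : 0 ≤ a) (ht : 0 < t) : besselDefect a t ≤ t ^ (-2 : ℝ) := by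
  calc besselDefect a t ≤ 1 / t ^ 2 * 1 := by
        unfold besselDefect
        gcongr
        · linarith [exp_pos (-t)]
        · exact exp_le_one_iff.mpr (by simpa using by positivity)
    _ = t ^ (-2 : ℝ) := by rw [rpow_neg ht.le, rpow_two, mul_one, one_div]

lemma besselDefect_le_one_div (ha : 0 < a) (ht : 0 < t) : besselDefect a t ≤ 1 / a := by
  have hexp : exp (-(a / t)) ≤ t / a := by
    simpa using exp_neg_le_factorial_div_pow 1 (div_pos ha ht)
  calc besselDefect a t ≤ t / t ^ 2 * (t / a) := by
        unfold besselDefect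
        gcongr
        linarith [one_sub_le_exp_neg t]
    _ = 1 / a := by field_simp

lemma exp_neg_le_quadratic (ht : 0 ≤ t) : exp (-t) ≤ 1 - t + t ^ 2 / 2 := by
  have hquad := quadratic_le_exp_of_nonneg ht
  rw [exp_neg, inv_le_iff_one_le_mul₀ (exp_pos t)]
  nlinarith [sq_nonneg (t ^ 2), sq_nonneg (t - 1)]

lemma inv_sub_le_besselDefect (ha : 0 ≤ a) (hat : a ≤ t) (ht : 0 < t) (ht1 : t ≤ 1) :
    t⁻¹ - (1 / 2 + a * t ^ (-2 : ℝ)) ≤ besselDefect a t := by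
  have hlin : t - t ^ 2 / 2 ≤ 1 - exp (-t) := by linarith [exp_neg_le_quadratic ht.le]
  have hlin0 : 0 ≤ t - t ^ 2 / 2 := by nlinarith
  have hexp0 : 0 ≤ 1 - a / t := sub_nonneg.mpr ((div_le_one ht).mpr hat)
  calc t⁻¹ - (1 / 2 + a * t ^ (-2 : ℝ))
      = (t - t ^ 2 / 2) / t ^ 2 * (1 - a / t) - a / (2 * t) := by
        rw [rpow_neg ht.le, rpow_two]
        field_simp
        ring
    _ ≤ (t - t ^ 2 / 2) / t ^ 2 * (1 - a / t) :=
        sub_le_self _ (by positivity)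
    _ ≤ besselDefect a t := by
        unfold besselDefect
        gcongr
        · exact div_nonneg (hlin0.trans hlin) (by positivity)
        · exact one_sub_le_exp_neg _

lemma abs_setIntegral_Ioc_zero_besselDefect_le (ha : 0 < a) :
    |∫ t in Ioc 0 a, besselDefect a t| ≤ 1 := by
  have hle : ∀ t ∈ Ioc 0 a, ‖besselDefect a t‖ ≤ 1 / a := fun t ht ↦ by
    rw [norm_of_nonneg (besselDefect_nonneg a ht.1)]
    exact besselDefect_le_one_div ha ht.1
  calc |∫ t in Ioc 0 a, besselDefect a t| ≤ 1 / a * volume.real (Ioc 0 a) :=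
        norm_setIntegral_le_of_norm_le_const measure_Ioc_lt_top hle
    _ = 1 := by rw [volume_real_Ioc_of_le ha.le, sub_zero, one_div_mul_cancel ha.ne']

lemma abs_setIntegral_Ioi_one_besselDefect_le (ha : 0 ≤ a) :
    |∫ t in Ioi 1, besselDefect a t| ≤ 1 := by
  have hrpow : IntegrableOn (fun t : ℝ ↦ t ^ (-2 : ℝ)) (Ioi 1) :=
    integrableOn_Ioi_rpow_of_lt (by norm_num) one_pos
  calc |∫ t in Ioi 1, besselDefect a t| ≤ ∫ t in Ioi (1 : ℝ), t ^ (-2 : ℝ) := by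
        rw [← norm_eq_abs]
        refine norm_integral_le_of_norm_le hrpow ?_
        filter_upwards [self_mem_ae_restrict measurableSet_Ioi] with t (ht : 1 < t)
        rw [norm_of_nonneg (besselDefect_nonneg a (one_pos.trans ht))]
        exact besselDefect_le_rpow ha (one_pos.trans ht)
    _ = 1 := by
        rw [integral_Ioi_rpow_of_lt (a := -2) (by norm_num) one_pos]
        norm_num

lemma abs_setIntegral_Ioc_one_besselDefect_add_log_le (ha : 0 < a) (ha1 : a ≤ 1) :
    |(∫ t in Ioc a 1, besselDefect a t) + log a| ≤ 3 / 2 := by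
  have hmem : (0 : ℝ) ∉ uIcc a 1 := notMem_uIcc_of_lt ha one_pos
  have hinv : IntervalIntegrable (fun t : ℝ ↦ t⁻¹) volume a 1 :=
    intervalIntegrable_inv_iff.mpr (.inr hmem)
  have hrpow : IntervalIntegrable (fun t : ℝ ↦ t ^ (-2 : ℝ)) volume a 1 :=
    intervalIntegral.intervalIntegrable_rpow (.inr hmem)
  have hdefect : IntegrableOn (besselDefect a) (Ioc a 1) :=
    (integrableOn_besselDefect ha).mono_set fun t ht ↦ ha.trans ht.1
  have hlog : ∫ t in Ioc a 1, t⁻¹ = -log a := by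
    rw [← intervalIntegral.integral_of_le ha1, integral_inv hmem, one_div, log_inv]
  have hbound : ∀ t ∈ Ioc a 1, ‖besselDefect a t - t⁻¹‖ ≤ 1 / 2 + a * t ^ (-2 : ℝ) := by
    rintro t ⟨hat, ht1⟩
    have ht : 0 < t := ha.trans hat
    rw [norm_eq_abs, abs_sub_comm, abs_of_nonneg (sub_nonneg.mpr (besselDefect_le_inv ha.le ht))]
    linarith [inv_sub_le_besselDefect ha.le hat.le ht ht1]
  have hmajor : IntervalIntegrable (fun t : ℝ ↦ 1 / 2 + a * t ^ (-2 : ℝ)) volume a 1 :=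
    intervalIntegrable_const.add (hrpow.const_mul a)
  calc |(∫ t in Ioc a 1, besselDefect a t) + log a|
      = |∫ t in Ioc a 1, (besselDefect a t - t⁻¹)| := by
        rw [integral_sub hdefect hinv.1, hlog, sub_neg_eq_add]
    _ ≤ ∫ t in Ioc a 1, (1 / 2 + a * t ^ (-2 : ℝ)) :=
        norm_integral_le_of_norm_le hmajor.1 (ae_restrict_of_forall_mem measurableSet_Ioc hbound)
    _ = (1 - a) / 2 + a * (a⁻¹ - 1) := by
        rw [← intervalIntegral.integral_of_le ha1,
          intervalIntegral.integral_add intervalIntegrable_const (hrpow.const_mul a),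
          intervalIntegral.integral_const, intervalIntegral.integral_const_mul,
          integral_rpow (.inr ⟨by norm_num, hmem⟩)]
        norm_num only [rpow_neg_one, smul_eq_mul, one_rpow]
        ring
    _ ≤ 3 / 2 := by
        rw [mul_sub, mul_inv_cancel₀ ha.ne']
        linarith

lemma abs_besselIntegral_two_sub_le (ha : 0 < a) (ha1 : a ≤ 1) :
    |besselIntegral 2 a - 1 / a - log a| ≤ 7 / 2 := by
  have hint {s : Set ℝ} (hs : s ⊆ Ioi 0) : IntegrableOn (besselDefect a) s :=
    (integrableOn_besselDefect ha).mono_set hs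
  have hsplit : 1 / a - besselIntegral 2 a = (∫ t in Ioc 0 a, besselDefect a t) +
      (∫ t in Ioc a 1, besselDefect a t) + ∫ t in Ioi 1, besselDefect a t := by
    rw [← integral_besselDefect ha, ← Ioc_union_Ioi_eq_Ioi zero_le_one,
      setIntegral_union (Ioc_disjoint_Ioi le_rfl) measurableSet_Ioi
        (hint Ioc_subset_Ioi_self) (hint (Ioi_subset_Ioi zero_le_one)),
      ← Ioc_union_Ioc_eq_Ioc ha.le ha1,
      setIntegral_union (Ioc_disjoint_Ioc_of_le le_rfl) measurableSet_Ioc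
        (hint Ioc_subset_Ioi_self) (hint fun t ht ↦ ha.trans ht.1)]
  have hzero := abs_le.mp (abs_setIntegral_Ioc_zero_besselDefect_le ha)
  have hmid := abs_le.mp (abs_setIntegral_Ioc_one_besselDefect_add_log_le ha ha1)
  have htop := abs_le.mp (abs_setIntegral_Ioi_one_besselDefect_le ha.le)
  exact abs_le.mpr ⟨by linarith, by linarith⟩

lemma exists_forall_abs_besselIntegral_two_sub_le (R : ℝ) :
    ∃ C, ∀ a ∈ Ioc 0 R, |besselIntegral 2 a - 1 / a - log a| ≤ C := by
  have hcont : ContinuousOn (fun a ↦ besselIntegral 2 a - 1 / a - log a) (Icc 1 R) := by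
    have hne : ∀ a ∈ Icc 1 R, a ≠ 0 := fun a ha ↦ (one_pos.trans_le ha.1).ne'
    exact (((continuousOn_besselIntegral 2).mono fun a ha ↦ one_pos.trans_le ha.1).sub
      (continuousOn_const.div continuousOn_id hne)).sub (continuousOn_log.mono hne)
  obtain ⟨C, hC⟩ := isCompact_Icc.exists_bound_of_continuousOn hcont
  refine ⟨max (7 / 2) C, fun a ⟨ha, haR⟩ ↦ ?_⟩
  rcases le_total a 1 with ha1 | ha1
  · exact (abs_besselIntegral_two_sub_le ha ha1).trans (le_max_left _ _)
  · exact (hC a ⟨ha1, haR⟩).trans (le_max_right _ _)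

end BesselIntegral

/-! ### The heat kernel and the resolvent kernel -/

section Kernel

variable {ι : Type*} [Fintype ι]

/-- The wave `x ↦ e^(iξ·x)` with frequency `ξ`; integrating against it gives the Fourier
transform. -/
def planeWave (ξ x : ι → ℝ) : ℂ := Complex.exp ((ξ ⬝ᵥ x : ℝ) * Complex.I)

lemma planeWave_zero_left (x : ι → ℝ) : planeWave 0 x = 1 := by simp [planeWave]

lemma norm_planeWave (ξ x : ι → ℝ) : ‖planeWave ξ x‖ = 1 := Complex.norm_exp_ofReal_mul_I _

@[fun_prop]
lemma continuous_planeWave (ξ : ι → ℝ) : Continuous (planeWave ξ) := by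
  unfold planeWave dotProduct
  fun_prop

lemma integrable_mul_planeWave {μ : Measure (ι → ℝ)} {f : (ι → ℝ) → ℂ} (hf : Integrable f μ)
    (ξ : ι → ℝ) : Integrable (fun x ↦ f x * planeWave ξ x) μ :=
  hf.mul_bdd (c := 1) (continuous_planeWave ξ).aestronglyMeasurable
    (.of_forall fun x ↦ (norm_planeWave ξ x).le)

lemma dotProduct_self_nonneg (x : ι → ℝ) : 0 ≤ x ⬝ᵥ x :=
  Finset.sum_nonneg fun i _ ↦ mul_self_nonneg (x i)

lemma dotProduct_self_pos {x : ι → ℝ} (hx : x ≠ 0) : 0 < x ⬝ᵥ x :=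
  (dotProduct_self_nonneg x).lt_of_ne' (mt dotProduct_self_eq_zero.mp hx)

lemma sq_norm_le_dotProduct_self (x : ι → ℝ) : ‖x‖ ^ 2 ≤ x ⬝ᵥ x := by
  refine (le_sqrt (norm_nonneg x) (dotProduct_self_nonneg x)).mp ?_
  refine (pi_norm_le_iff_of_nonneg (sqrt_nonneg _)).mpr fun i ↦ abs_le_sqrt ?_
  rw [sq]
  exact Finset.single_le_sum (f := fun i ↦ x i * x i) (fun j _ ↦ mul_self_nonneg (x j))
    (Finset.mem_univ i)

/-- The heat kernel `(4πt)^(-d/2) e^(-|x|²/4t)` on `ℝ^d`. -/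
def heatKernel (t : ℝ) (x : ι → ℝ) : ℝ :=
  (4 * π * t) ^ (-(Fintype.card ι / 2 : ℝ)) * exp (-(x ⬝ᵥ x / (4 * t)))

lemma measurable_heatKernel : Measurable fun p : ℝ × (ι → ℝ) ↦ heatKernel p.1 p.2 := by
  unfold heatKernel dotProduct
  fun_prop

lemma heatKernel_nonneg {t : ℝ} (ht : 0 ≤ t) (x : ι → ℝ) : 0 ≤ heatKernel t x := by
  unfold heatKernel
  positivity

lemma heatKernel_mul_planeWave (t : ℝ) (ξ x : ι → ℝ) :
    (heatKernel t x : ℂ) * planeWave ξ x =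
      ((4 * π * t) ^ (-(Fintype.card ι / 2 : ℝ)) : ℝ) *
        Complex.exp (-(1 / (4 * t) : ℝ) * ∑ i, (x i : ℂ) ^ 2 +
          ∑ i, (ξ i * Complex.I) * (x i : ℂ)) := by
  rw [heatKernel, planeWave, Complex.ofReal_mul, Complex.ofReal_exp, mul_assoc, ← Complex.exp_add]
  congr 2
  simp only [dotProduct]
  push_cast
  simp only [Finset.sum_mul, Finset.mul_sum, Finset.sum_div, ← Finset.sum_neg_distrib]
  congr 1 <;> exact Finset.sum_congr rfl fun i _ ↦ by ring

lemma integral_heatKernel_mul_planeWave {t : ℝ} (ht : 0 < t) (ξ : ι → ℝ) :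
    ∫ x, (heatKernel t x : ℂ) * planeWave ξ x = exp (-t * (ξ ⬝ᵥ ξ)) := by
  have hb : 0 < ((1 / (4 * t) : ℝ) : ℂ).re := by
    rw [Complex.ofReal_re]
    positivity
  have hprefactor : ((π : ℂ) / (1 / (4 * t) : ℝ)) ^ (Fintype.card ι / 2 : ℂ) =
      ((4 * π * t) ^ (Fintype.card ι / 2 : ℝ) : ℝ) := by
    rw [Complex.ofReal_cpow (by positivity)]
    push_cast
    congr 1
    field_simp
  have hexponent : (∑ i, (ξ i * Complex.I) ^ 2) / (4 * (1 / (4 * t) : ℝ)) =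
      ((-t * (ξ ⬝ᵥ ξ) : ℝ) : ℂ) := by
    have : (t : ℂ) ≠ 0 := by exact_mod_cast ht.ne'
    simp only [mul_pow, Complex.I_sq, ← Finset.sum_mul, dotProduct]
    push_cast
    field_simp
  simp only [heatKernel_mul_planeWave]
  rw [integral_const_mul, GaussianFourier.integral_cexp_neg_mul_sum_add hb, hprefactor, hexponent,
    ← mul_assoc, ← Complex.ofReal_mul, ← rpow_add (by positivity), neg_add_cancel, rpow_zero,
    Complex.ofReal_one, one_mul, Complex.ofReal_exp]

lemma integrable_heatKernel {t : ℝ} (ht : 0 < t) : Integrable (heatKernel (ι := ι) t) := by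
  have hb : 0 < ((1 / (4 * t) : ℝ) : ℂ).re := by
    rw [Complex.ofReal_re]
    positivity
  have h := (GaussianFourier.integrable_cexp_neg_mul_sum_add hb
    fun i : ι ↦ ((0 : ι → ℝ) i : ℂ) * Complex.I).const_mul
      (((4 * π * t) ^ (-(Fintype.card ι / 2 : ℝ)) : ℝ) : ℂ)
  simpa only [← heatKernel_mul_planeWave, planeWave_zero_left, mul_one, RCLike.re_to_complex,
    Complex.ofReal_re] using h.re

lemma integral_heatKernel {t : ℝ} (ht : 0 < t) : ∫ x : ι → ℝ, heatKernel t x = 1 := by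
  have h := integral_heatKernel_mul_planeWave ht (0 : ι → ℝ)
  simp only [planeWave_zero_left, mul_one, zero_dotProduct, mul_zero, exp_zero,
    Complex.ofReal_one, integral_complex_ofReal] at h
  exact_mod_cast h

/-- The convolution kernel of the resolvent `(1 - Δ)⁻¹ = ∫₀^∞ e^(-t) e^(tΔ) dt` on `ℝ^d`. -/
def resolventKernel (x : ι → ℝ) : ℝ := ∫ t in Ioi 0, exp (-t) * heatKernel t x

lemma resolventKernel_eq_besselIntegral (x : ι → ℝ) :
    resolventKernel x = (4 * π) ^ (-(Fintype.card ι / 2 : ℝ)) *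
      besselIntegral (Fintype.card ι / 2) (x ⬝ᵥ x / 4) := by
  rw [besselIntegral, ← integral_const_mul]
  refine setIntegral_congr_fun measurableSet_Ioi fun t (ht : 0 < t) ↦ ?_
  simp only [heatKernel]
  rw [mul_rpow (by positivity) ht.le, sub_eq_add_neg, exp_add, ← div_div]
  ring

lemma resolventKernel_nonneg (x : ι → ℝ) : 0 ≤ resolventKernel x :=
  setIntegral_nonneg measurableSet_Ioi fun _ ht ↦
    mul_nonneg (exp_pos _).le (heatKernel_nonneg (le_of_lt ht) x)

lemma resolventKernel_pos {x : ι → ℝ} (hx : x ≠ 0) : 0 < resolventKernel x := by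
  rw [resolventKernel_eq_besselIntegral]
  exact mul_pos (by positivity) (besselIntegral_pos _ (div_pos (dotProduct_self_pos hx) four_pos))

lemma continuousOn_resolventKernel : ContinuousOn (resolventKernel (ι := ι)) {0}ᶜ := by
  refine ContinuousOn.congr (continuousOn_const.mul
    ((continuousOn_besselIntegral (Fintype.card ι / 2)).comp (f := fun x : ι → ℝ ↦ x ⬝ᵥ x / 4)
      ?_ ?_)) fun x _ ↦ resolventKernel_eq_besselIntegral x
  · unfold dotProduct
    fun_prop
  · exact fun x hx ↦ div_pos (dotProduct_self_pos hx) four_pos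

lemma exists_forall_resolventKernel_le (N : ℕ) (hN : Fintype.card ι / 2 < (N + 1 : ℝ)) :
    ∃ C, 0 ≤ C ∧ ∀ x : ι → ℝ, x ≠ 0 → resolventKernel x ≤ C * ‖x‖⁻¹ ^ (2 * N) := by
  have hs : 0 < N - (Fintype.card ι / 2 : ℝ) + 1 := by linarith
  have := Gamma_pos_of_pos hs
  set B : ℝ := (4 * π) ^ (-(Fintype.card ι / 2 : ℝ)) *
    (N.factorial * Gamma (N - (Fintype.card ι / 2 : ℝ) + 1)) with hB
  have : 0 ≤ B := by positivity
  refine ⟨B * 4 ^ N, by positivity, fun x hx ↦ ?_⟩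
  have : 0 < ‖x‖ := norm_pos_iff.mpr hx
  calc resolventKernel x ≤ (4 * π) ^ (-(Fintype.card ι / 2 : ℝ)) *
        (N.factorial * Gamma (N - (Fintype.card ι / 2 : ℝ) + 1) / (x ⬝ᵥ x / 4) ^ N) := by
        rw [resolventKernel_eq_besselIntegral]
        gcongr
        exact besselIntegral_le N hN (div_pos (dotProduct_self_pos hx) four_pos)
    _ = B / (x ⬝ᵥ x / 4) ^ N := by rw [hB, ← mul_div_assoc]
    _ ≤ B / (‖x‖ ^ 2 / 4) ^ N := by
        gcongr
        exact sq_norm_le_dotProduct_self x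
    _ = B * 4 ^ N * ‖x‖⁻¹ ^ (2 * N) := by
        rw [div_pow, ← pow_mul, inv_pow]
        field_simp

lemma integrable_exp_neg_mul_heatKernel :
    Integrable (fun p : ℝ × (ι → ℝ) ↦ exp (-p.1) * heatKernel p.1 p.2)
      ((volume.restrict (Ioi 0)).prod volume) := by
  have hmeas : Measurable fun p : ℝ × (ι → ℝ) ↦ exp (-p.1) * heatKernel p.1 p.2 := by
    have := measurable_heatKernel (ι := ι)
    fun_prop
  refine (integrable_prod_iff hmeas.aestronglyMeasurable).mpr ⟨?_, ?_⟩
  · filter_upwards [self_mem_ae_restrict measurableSet_Ioi] with t ht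
    exact (integrable_heatKernel ht).const_mul _
  · refine (integrableOn_exp_neg_Ioi 0).congr_fun (fun t (ht : 0 < t) ↦ ?_) measurableSet_Ioi
    simp only [norm_mul, norm_of_nonneg (exp_pos (-t)).le,
      norm_of_nonneg (heatKernel_nonneg ht.le _)]
    rw [integral_const_mul, integral_heatKernel ht, mul_one]

lemma integrable_resolventKernel : Integrable (resolventKernel (ι := ι)) :=
  integrable_exp_neg_mul_heatKernel.integral_prod_right

lemma integral_resolventKernel_mul_planeWave (ξ : ι → ℝ) :
    ∫ x, (resolventKernel x : ℂ) * planeWave ξ x = (1 / (1 + ξ ⬝ᵥ ξ) : ℝ) := by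
  have hprod : Integrable (fun p : (ι → ℝ) × ℝ ↦
      ((exp (-p.2) * heatKernel p.2 p.1 : ℝ) : ℂ) * planeWave ξ p.1)
      (volume.prod (volume.restrict (Ioi 0))) :=
    integrable_exp_neg_mul_heatKernel.swap.ofReal.mul_bdd (c := 1)
      ((continuous_planeWave ξ).comp continuous_fst).aestronglyMeasurable
      (.of_forall fun p ↦ (norm_planeWave ξ p.1).le)
  have hpos : 0 < 1 + ξ ⬝ᵥ ξ := by linarith [dotProduct_self_nonneg ξ]
  calc ∫ x, (resolventKernel x : ℂ) * planeWave ξ x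
      = ∫ x, ∫ t in Ioi 0, ((exp (-t) * heatKernel t x : ℝ) : ℂ) * planeWave ξ x := by
        simp only [integral_mul_const, resolventKernel, integral_complex_ofReal]
    _ = ∫ t in Ioi 0, ∫ x, ((exp (-t) * heatKernel t x : ℝ) : ℂ) * planeWave ξ x :=
        integral_integral_swap hprod
    _ = ∫ t in Ioi (0 : ℝ), ((exp (-((1 + ξ ⬝ᵥ ξ) * t)) : ℝ) : ℂ) := by
        refine setIntegral_congr_fun measurableSet_Ioi fun t ht ↦ ?_
        simp only [Complex.ofReal_mul, mul_assoc]
        rw [integral_const_mul, integral_heatKernel_mul_planeWave ht, ← Complex.ofReal_mul,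
          ← exp_add]
        ring_nf
    _ = (1 / (1 + ξ ⬝ᵥ ξ) : ℝ) := by
        rw [integral_complex_ofReal]
        simpa using congrArg Complex.ofReal (integral_rpow_mul_exp_neg_mul_Ioi one_pos hpos)

end Kernel

lemma exists_forall_abs_resolventKernel_sub_le (R : ℝ) :
    ∃ C, ∀ x : Fin 4 → ℝ, x ≠ 0 → x ⬝ᵥ x ≤ R →
      |resolventKernel x - 1 / (4 * π ^ 2 * (x ⬝ᵥ x)) - 1 / (16 * π ^ 2) * log (x ⬝ᵥ x)| ≤ C := by
  obtain ⟨C, hC⟩ := exists_forall_abs_besselIntegral_two_sub_le (R / 4)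
  refine ⟨1 / (16 * π ^ 2) * (C + log 4), fun x hx hxR ↦ ?_⟩
  have hr : 0 < x ⬝ᵥ x := dotProduct_self_pos hx
  have hK : resolventKernel x = 1 / (16 * π ^ 2) * besselIntegral 2 (x ⬝ᵥ x / 4) := by
    rw [resolventKernel_eq_besselIntegral, Fintype.card_fin, rpow_neg (by positivity)]
    norm_num [mul_pow]
  have hsplit : resolventKernel x - 1 / (4 * π ^ 2 * (x ⬝ᵥ x)) - 1 / (16 * π ^ 2) * log (x ⬝ᵥ x) =
      1 / (16 * π ^ 2) * (besselIntegral 2 (x ⬝ᵥ x / 4) - 1 / (x ⬝ᵥ x / 4) - log (x ⬝ᵥ x / 4) -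
        log 4) := by
    rw [hK, log_div hr.ne' four_ne_zero]
    field_simp
    ring
  rw [hsplit, abs_mul, abs_of_pos (by positivity)]
  gcongr
  refine (abs_sub _ _).trans (add_le_add (hC _ ⟨by positivity, by linarith⟩) ?_)
  exact (abs_of_pos (log_pos (by norm_num))).le

/-! ### Fourier coefficients determine integrable functions -/

lemma ae_eq_zero_of_forall_integral_boundedContinuousFunction_smul {X E : Type*}
    [TopologicalSpace X] [HasOuterApproxClosed X] [MeasurableSpace X] [BorelSpace X]
    [NormedAddCommGroup E] [NormedSpace ℝ E] [CompleteSpace E] {μ : Measure X} {f : X → E}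
    (hf : Integrable f μ) (h : ∀ g : BoundedContinuousFunction X NNReal, ∫ x, g x • f x ∂μ = 0) :
    f =ᵐ[μ] 0 := by
  refine ae_eq_zero_of_forall_setIntegral_isClosed_eq_zero hf fun s hs ↦ ?_
  have hlim : Tendsto (fun n ↦ ∫ x, hs.apprSeq n x • f x ∂μ) atTop
      (𝓝 (∫ x, s.indicator (fun _ ↦ (1 : NNReal)) x • f x ∂μ)) := by
    refine tendsto_integral_of_dominated_convergence (fun x ↦ ‖f x‖)
      (fun n ↦ (hs.apprSeq n).continuous.aestronglyMeasurable.smul hf.aestronglyMeasurable)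
      hf.norm (fun n ↦ .of_forall fun x ↦ ?_) (.of_forall fun x ↦ ?_)
    · rw [NNReal.smul_def, norm_smul, norm_of_nonneg (NNReal.coe_nonneg _)]
      exact mul_le_of_le_one_left (norm_nonneg _)
        (HasOuterApproxClosed.apprSeq_apply_le_one hs n x)
    · exact (tendsto_pi_nhds.mp (HasOuterApproxClosed.tendsto_apprSeq hs) x).smul_const _
  simp only [h] at hlim
  rw [← integral_indicator hs.measurableSet, tendsto_nhds_unique tendsto_const_nhds hlim]
  congr with x
  by_cases hx : x ∈ s <;> simp [hx]

section Torus

variable {d : Type*}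

/-- The covering map `ℝ^d → (ℝ/2πℤ)^d`, where the torus is rescaled to Mathlib's `UnitAddTorus`. -/
def torusProj (x : d → ℝ) : UnitAddTorus d := fun i ↦ ((x i / (2 * π) : ℝ) : UnitAddCircle)

/-- The section of `torusProj` with values in `(-π, π]^d`. -/
def torusSection (y : UnitAddTorus d) : d → ℝ := fun i ↦ Complex.arg (AddCircle.toCircle (y i))

lemma continuous_torusProj : Continuous (torusProj (d := d)) :=
  continuous_pi fun i ↦ (AddCircle.continuous_mk' 1).comp (by fun_prop)

lemma measurable_torusSection : Measurable (torusSection (d := d)) := by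
  have hcircle : Measurable fun θ : UnitAddCircle ↦ (AddCircle.toCircle θ : ℂ) :=
    (continuous_subtype_val.comp AddCircle.continuous_toCircle).measurable
  exact measurable_pi_lambda _ fun i ↦
    Complex.measurable_arg.comp (hcircle.comp (measurable_pi_apply i))

lemma torusSection_torusProj {x : d → ℝ} (hx : ∀ i, x i ∈ Ioc (-π) π) :
    torusSection (torusProj x) = x := by
  funext i
  have hangle : 2 * π / 1 * (x i / (2 * π)) = x i := by field_simp
  have hperiod : -π + 2 * π = π := by ring
  rw [torusSection, torusProj, AddCircle.toCircle_apply_mk, Circle.coe_exp, hangle,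
    Complex.arg_exp_mul_I, toIocMod_eq_self, hperiod]
  exact hx i

variable [Fintype d] {μ : Measure (UnitAddTorus d)} {f : UnitAddTorus d → ℂ}

lemma integral_mul_continuousMap_eq_zero_of_forall_mFourier (hf : Integrable f μ)
    (h : ∀ n, ∫ y, f y * UnitAddTorus.mFourier n y ∂μ = 0) (φ : C(UnitAddTorus d, ℂ)) :
    ∫ y, f y * φ y ∂μ = 0 := by
  have hint (ψ : C(UnitAddTorus d, ℂ)) : Integrable (fun y ↦ f y * ψ y) μ :=
    hf.mul_bdd ψ.continuous.aestronglyMeasurable (.of_forall ψ.norm_coe_le_norm)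
  let pairing : C(UnitAddTorus d, ℂ) →ₗ[ℂ] ℂ :=
    { toFun ψ := ∫ y, f y * ψ y ∂μ
      map_add' ψ χ := by
        simp only [ContinuousMap.add_apply, mul_add]
        exact integral_add (hint ψ) (hint χ)
      map_smul' c ψ := by
        simp only [ContinuousMap.smul_apply, smul_eq_mul, RingHom.id_apply, mul_left_comm _ c]
        exact integral_const_mul c _ }
  have hbound (ψ : C(UnitAddTorus d, ℂ)) : ‖pairing ψ‖ ≤ (∫ y, ‖f y‖ ∂μ) * ‖ψ‖ := by
    rw [← integral_mul_const]
    refine norm_integral_le_of_norm_le (hf.norm.mul_const _) (.of_forall fun y ↦ ?_)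
    rw [norm_mul]
    gcongr
    exact ψ.norm_coe_le_norm y
  have hzero : pairing.mkContinuous _ hbound = 0 := by
    refine ContinuousLinearMap.ext_on (s := range UnitAddTorus.mFourier) ?_ ?_
    · rw [dense_iff_closure_eq, ← Submodule.topologicalClosure_coe,
        UnitAddTorus.span_mFourier_closure_eq_top, Submodule.top_coe]
    · rintro _ ⟨n, rfl⟩
      exact h n
  exact DFunLike.congr_fun hzero φ

lemma ae_eq_zero_of_forall_integral_mul_mFourier (hf : Integrable f μ)
    (h : ∀ n, ∫ y, f y * UnitAddTorus.mFourier n y ∂μ = 0) : f =ᵐ[μ] 0 := by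
  refine ae_eq_zero_of_forall_integral_boundedContinuousFunction_smul hf fun g ↦ ?_
  rw [← integral_mul_continuousMap_eq_zero_of_forall_mFourier hf h
    ⟨fun y ↦ ((g y : ℝ) : ℂ), by fun_prop⟩]
  congr with y
  simp [NNReal.smul_def, mul_comm]

lemma mFourier_torusProj (n : d → ℤ) (x : d → ℝ) :
    UnitAddTorus.mFourier n (torusProj x) = planeWave (fun i ↦ (n i : ℝ)) x := by
  have : (π : ℂ) ≠ 0 := by exact_mod_cast pi_ne_zero
  simp only [UnitAddTorus.mFourier, ContinuousMap.coe_mk, torusProj, fourier_coe_apply, planeWave,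
    dotProduct, ← Complex.exp_sum]
  push_cast
  rw [Finset.sum_mul]
  congr 1
  refine Finset.sum_congr rfl fun i _ ↦ ?_
  field_simp

lemma ae_eq_zero_of_forall_integral_mul_planeWave {μ : Measure (d → ℝ)}
    (hμ : ∀ᵐ x ∂μ, ∀ i, x i ∈ Ioc (-π) π) {f : (d → ℝ) → ℂ} (hf : Integrable f μ)
    (h : ∀ n : d → ℤ, ∫ x, f x * planeWave (fun i ↦ (n i : ℝ)) x ∂μ = 0) : f =ᵐ[μ] 0 := by
  have hproj : Measurable (torusProj (d := d)) := continuous_torusProj.measurable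
  have hsection : ∀ᵐ x ∂μ, torusSection (torusProj x) = x :=
    hμ.mono fun x ↦ torusSection_torusProj
  have hpres : MeasurePreserving torusSection (μ.map torusProj) μ := by
    refine ⟨measurable_torusSection, ?_⟩
    rw [Measure.map_map measurable_torusSection hproj]
    exact (Measure.map_congr hsection).trans Measure.map_id
  have hint : Integrable (f ∘ torusSection) (μ.map torusProj) :=
    hpres.integrable_comp_of_integrable hf
  have hzero : f ∘ torusSection =ᵐ[μ.map torusProj] 0 := by
    refine ae_eq_zero_of_forall_integral_mul_mFourier hint fun n ↦ ?_
    have hmeas : AEStronglyMeasurable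
        (fun y ↦ (f ∘ torusSection) y * UnitAddTorus.mFourier n y) (μ.map torusProj) :=
      hint.aestronglyMeasurable.mul (ContinuousMap.continuous _).aestronglyMeasurable
    rw [integral_map hproj.aemeasurable hmeas, ← h n]
    refine integral_congr_ae (hsection.mono fun x hx ↦ ?_)
    simp only [Function.comp_apply, hx, mFourier_torusProj]
  filter_upwards [ae_of_ae_map hproj.aemeasurable hzero, hsection] with x hx hsec
  simpa only [Function.comp_apply, hsec, Pi.zero_apply] using hx

end Torus

/-! ### Periodization -/

lemma lpt_zero : lpt 0 = 0 := by
  ext i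
  simp [lpt]

lemma lpt_add (k l : Fin 4 → ℤ) : lpt (k + l) = lpt k + lpt l := by
  ext i
  simp only [lpt, Pi.add_apply]
  push_cast
  ring

lemma FD_eq_pi : FD = univ.pi fun _ ↦ Ioc (-π) π := by
  ext x
  simp [FD]

lemma measurableSet_FD : MeasurableSet FD := by
  rw [FD_eq_pi]
  exact .univ_pi fun _ ↦ measurableSet_Ioc

lemma volume_FD_lt_top : volume FD < ⊤ := by
  rw [FD_eq_pi, volume_pi_pi]
  exact ENNReal.prod_lt_top fun _ _ ↦ measure_Ioc_lt_top

lemma existsUnique_add_lpt_mem_FD (x : Fin 4 → ℝ) : ∃! k, x + lpt k ∈ FD := by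
  have hcoord (i : Fin 4) : ∃! m : ℤ, x i + 2 * π * m ∈ Ioc (-π) π := by
    have hperiod : -π + 2 * π = π := by ring
    simpa only [zsmul_eq_mul, mul_comm _ (2 * π), hperiod] using
      existsUnique_add_zsmul_mem_Ioc two_pi_pos (x i) (-π)
  choose k hk huniq using hcoord
  exact ⟨k, hk, fun l hl ↦ funext fun i ↦ huniq i (l i) (hl i)⟩

lemma ae_eq_of_ae_eq_restrict_FD {f g : (Fin 4 → ℝ) → ℝ} (hf : Per f) (hg : Per g)
    (h : f =ᵐ[volume.restrict FD] g) : f =ᵐ[volume] g := by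
  have htranslate : ∀ᵐ x, ∀ k, x + lpt k ∈ FD → f (x + lpt k) = g (x + lpt k) :=
    ae_all_iff.mpr fun k ↦ (measurePreserving_add_right volume (lpt k)).quasiMeasurePreserving.ae
      ((ae_restrict_iff' measurableSet_FD).mp h)
  filter_upwards [htranslate] with x hx
  obtain ⟨k, hk, -⟩ := existsUnique_add_lpt_mem_FD x
  rw [← hf x k, ← hg x k, hx k hk]

/-- The sum of all translates of `f` by the lattice `(2πℤ)⁴`; it represents the push-forward of
`f` to the torus. -/
def periodization {E : Type*} [AddCommMonoid E] [TopologicalSpace E] (f : (Fin 4 → ℝ) → E)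
    (x : Fin 4 → ℝ) : E :=
  ∑' k, f (x - lpt k)

lemma per_periodization (f : (Fin 4 → ℝ) → ℝ) : Per (periodization f) := by
  intro x k
  refine (Equiv.addRight k).tsum_eq (fun l ↦ f (x + lpt k - lpt l)) |>.symm.trans ?_
  simp only [periodization, Equiv.coe_addRight, lpt_add, add_sub_add_right_eq_sub]

section Unfolding

variable {E : Type*} [NormedAddCommGroup E] [NormedSpace ℝ E] {f : (Fin 4 → ℝ) → E}

lemma hasSum_setIntegral_FD_sub_lpt (hf : Integrable f) :
    HasSum (fun k ↦ ∫ x in FD, f (x - lpt k)) (∫ x, f x) := by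
  have hmeas (k : Fin 4 → ℤ) : MeasurableSet ((· + lpt k) ⁻¹' FD) :=
    measurable_add_const _ measurableSet_FD
  have hdisj : Pairwise (Function.onFun Disjoint fun k ↦ (· + lpt k) ⁻¹' FD) := fun k l hkl ↦
    disjoint_left.mpr fun x hk hl ↦ hkl ((existsUnique_add_lpt_mem_FD x).unique hk hl)
  have hcover : ⋃ k, (· + lpt k) ⁻¹' FD = univ := eq_univ_of_forall fun x ↦
    mem_iUnion.mpr (existsUnique_add_lpt_mem_FD x).exists
  have hsum := hasSum_integral_iUnion hmeas hdisj hf.integrableOn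
  rw [hcover, setIntegral_univ] at hsum
  convert hsum using 2 with k
  have hpres := (measurePreserving_add_right volume (lpt k)).setIntegral_preimage_emb
    (MeasurableEquiv.addRight (lpt k)).measurableEmbedding (fun x ↦ f (x - lpt k)) FD
  simpa only [add_sub_cancel_right] using hpres.symm

lemma setIntegral_FD_periodization [CompleteSpace E] (hf : Integrable f) :
    ∫ x in FD, periodization f x = ∫ x, f x :=
  (hasSum_integral_of_summable_integral_norm (fun k ↦ (hf.comp_sub_right (lpt k)).integrableOn)
    (hasSum_setIntegral_FD_sub_lpt hf.norm).summable).unique (hasSum_setIntegral_FD_sub_lpt hf)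

end Unfolding

lemma exists_dotProduct_lpt_eq (n k : Fin 4 → ℤ) :
    ∃ m : ℤ, (fun i ↦ (n i : ℝ)) ⬝ᵥ lpt k = m * (2 * π) := by
  refine ⟨∑ i, n i * k i, ?_⟩
  push_cast
  rw [Finset.sum_mul]
  exact Finset.sum_congr rfl fun i _ ↦ by simp only [lpt]; ring

lemma planeWave_sub_lpt (n k : Fin 4 → ℤ) (x : Fin 4 → ℝ) :
    planeWave (fun i ↦ (n i : ℝ)) (x - lpt k) = planeWave (fun i ↦ (n i : ℝ)) x := by
  obtain ⟨m, hm⟩ := exists_dotProduct_lpt_eq n k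
  rw [planeWave, planeWave, dotProduct_sub, hm]
  push_cast
  rw [sub_mul, mul_assoc, Complex.exp_periodic.sub_int_mul_eq]

lemma setIntegral_FD_periodization_mul_planeWave {f : (Fin 4 → ℝ) → ℝ} (hf : Integrable f)
    (n : Fin 4 → ℤ) :
    ∫ x in FD, ((periodization f x : ℝ) : ℂ) * planeWave (fun i ↦ (n i : ℝ)) x =
      ∫ x, (f x : ℂ) * planeWave (fun i ↦ (n i : ℝ)) x := by
  have hfC : Integrable (fun x ↦ (f x : ℂ)) := hf.ofReal
  rw [← setIntegral_FD_periodization (integrable_mul_planeWave hfC _)]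
  simp only [periodization, planeWave_sub_lpt, tsum_mul_right, Complex.ofReal_tsum]

/-! ### The Green's function of the torus -/

lemma one_le_norm_pi_int_of_ne_zero {ι : Type*} [Fintype ι] {k : ι → ℤ} (hk : k ≠ 0) : 1 ≤ ‖k‖ := by
  obtain ⟨i, hi⟩ := Function.ne_iff.mp hk
  have : (1 : ℝ) ≤ ‖k i‖ := by
    rw [Int.norm_eq_abs]
    exact_mod_cast Int.one_le_abs hi
  exact this.trans (norm_le_pi_norm k i)

lemma norm_intCast_comp {ι : Type*} [Fintype ι] (k : ι → ℤ) : ‖fun i ↦ (k i : ℝ)‖ = ‖k‖ := by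
  simp only [Pi.norm_def, nnnorm, Int.norm_cast_real]

lemma summable_norm_inv_pow {ι : Type*} [Fintype ι] {N : ℕ} (hN : Fintype.card ι < N) :
    Summable fun k : ι → ℤ ↦ ‖k‖⁻¹ ^ N := by
  classical
  let b := (Pi.basisFun ℝ ι).restrictScalars ℤ
  have hsum := ZLattice.summable_norm_pow_inv (Submodule.span ℤ (range (Pi.basisFun ℝ ι))) N
    (by rwa [Module.finrank_eq_card_basis b])
  have hcoe (k : ι → ℤ) : ((b.equivFun.symm k : _) : ι → ℝ) = fun i ↦ (k i : ℝ) := by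
    ext i
    simp [b, Module.Basis.equivFun_symm_apply, Pi.single_apply]
  refine (b.equivFun.symm.toEquiv.summable_iff.mpr hsum).congr fun k ↦ ?_
  rw [Function.comp_apply, LinearEquiv.coe_toEquiv, Submodule.coe_norm, hcoe, norm_intCast_comp]

lemma norm_lpt (k : Fin 4 → ℤ) : ‖lpt k‖ = 2 * π * ‖k‖ := by
  have hsmul : lpt k = (2 * π) • fun i ↦ (k i : ℝ) := rfl
  rw [hsmul, norm_smul, norm_of_nonneg two_pi_pos.le, norm_intCast_comp]

lemma FD_subset_ball : FD ⊆ Metric.ball 0 (3 * π / 2) := by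
  intro x hx
  rw [mem_ball_zero_iff, pi_norm_lt_iff (by positivity)]
  exact fun i ↦ abs_lt.mpr ⟨by linarith [(hx i).1, pi_pos], by linarith [(hx i).2, pi_pos]⟩

lemma half_pi_mul_norm_le_norm_sub_lpt {x : Fin 4 → ℝ} (hx : x ∈ Metric.ball 0 (3 * π / 2))
    {k : Fin 4 → ℤ} (hk : k ≠ 0) : π / 2 * ‖k‖ ≤ ‖x - lpt k‖ := by
  have htriangle : ‖lpt k‖ - ‖x‖ ≤ ‖x - lpt k‖ := norm_sub_rev x _ ▸ norm_sub_norm_le _ _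
  rw [norm_lpt] at htriangle
  have hx' : ‖x‖ < 3 * π / 2 := mem_ball_zero_iff.mp hx
  nlinarith [one_le_norm_pi_int_of_ne_zero hk, pi_pos]

lemma sub_lpt_ne_zero {x : Fin 4 → ℝ} (hx : x ∈ Metric.ball 0 (3 * π / 2)) {k : Fin 4 → ℤ}
    (hk : k ≠ 0) : x - lpt k ≠ 0 := by
  have := one_le_norm_pi_int_of_ne_zero hk
  exact norm_pos_iff.mp ((by positivity : 0 < π / 2 * ‖k‖).trans_le
    (half_pi_mul_norm_le_norm_sub_lpt hx hk))

/-- The Green's function of `1 - Δ` on the torus, built by summing the resolvent kernel of `ℝ⁴`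
over the lattice. -/
def torusGreen : (Fin 4 → ℝ) → ℝ := periodization resolventKernel

/-- The part of the lattice sum `torusGreen` which is regular at `0`. -/
def torusGreenTail (x : Fin 4 → ℝ) : ℝ :=
  ∑' k, if k = 0 then 0 else resolventKernel (x - lpt k)

lemma exists_summable_forall_norm_tail_le :
    ∃ u : (Fin 4 → ℤ) → ℝ, Summable u ∧ ∀ k, ∀ x ∈ Metric.ball 0 (3 * π / 2),
      ‖if k = 0 then 0 else resolventKernel (x - lpt k)‖ ≤ u k := by
  obtain ⟨C, hC, hdecay⟩ := exists_forall_resolventKernel_le (ι := Fin 4) 3 (by norm_num)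
  refine ⟨fun k ↦ C * ((π / 2)⁻¹ ^ 6 * ‖k‖⁻¹ ^ 6),
    ((summable_norm_inv_pow (by simp)).mul_left _).mul_left C, fun k x hx ↦ ?_⟩
  split_ifs with hk
  · rw [norm_zero]
    positivity
  · have := one_le_norm_pi_int_of_ne_zero hk
    calc ‖resolventKernel (x - lpt k)‖ ≤ C * ‖x - lpt k‖⁻¹ ^ (2 * 3) := by
          rw [norm_of_nonneg (resolventKernel_nonneg _)]
          exact hdecay _ (sub_lpt_ne_zero hx hk)
      _ ≤ C * (π / 2 * ‖k‖)⁻¹ ^ 6 := by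
          gcongr
          exact half_pi_mul_norm_le_norm_sub_lpt hx hk
      _ = C * ((π / 2)⁻¹ ^ 6 * ‖k‖⁻¹ ^ 6) := by rw [mul_inv, mul_pow]

lemma torusGreen_eq_add_tail {x : Fin 4 → ℝ} (hx : x ∈ Metric.ball 0 (3 * π / 2)) :
    torusGreen x = resolventKernel x + torusGreenTail x := by
  obtain ⟨u, hu, hle⟩ := exists_summable_forall_norm_tail_le
  have hsum : Summable fun k ↦ resolventKernel (x - lpt k) := by
    refine .of_norm_bounded_eventually hu ?_
    filter_upwards [eventually_cofinite_ne 0] with k hk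
    simpa only [if_neg hk] using hle k x hx
  rw [torusGreen, periodization, hsum.tsum_eq_add_tsum_ite 0, lpt_zero, sub_zero, torusGreenTail]

lemma torusGreenTail_nonneg (x : Fin 4 → ℝ) : 0 ≤ torusGreenTail x :=
  tsum_nonneg fun _ ↦ ite_nonneg le_rfl (resolventKernel_nonneg _)

lemma exists_forall_abs_torusGreenTail_le :
    ∃ C, ∀ x ∈ Metric.ball 0 (3 * π / 2), |torusGreenTail x| ≤ C := by
  obtain ⟨u, hu, hle⟩ := exists_summable_forall_norm_tail_le
  exact ⟨∑' k, u k, fun x hx ↦ tsum_of_norm_bounded hu.hasSum fun k ↦ hle k x hx⟩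

lemma continuousOn_torusGreenTail : ContinuousOn torusGreenTail (Metric.ball 0 (3 * π / 2)) := by
  obtain ⟨u, hu, hle⟩ := exists_summable_forall_norm_tail_le
  refine continuousOn_tsum (fun k ↦ ?_) hu hle
  split_ifs with hk
  · exact continuousOn_const
  · exact continuousOn_resolventKernel.comp (by fun_prop) fun x hx ↦ sub_lpt_ne_zero hx hk

lemma integrableOn_torusGreen : IntegrableOn torusGreen FD := by
  obtain ⟨C, hC⟩ := exists_forall_abs_torusGreenTail_le
  have htail : IntegrableOn torusGreenTail FD :=
    .of_bound volume_FD_lt_top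
      ((continuousOn_torusGreenTail.mono FD_subset_ball).aestronglyMeasurable measurableSet_FD) C
      (ae_restrict_of_forall_mem measurableSet_FD fun x hx ↦ hC x (FD_subset_ball hx))
  exact (integrable_resolventKernel.integrableOn.add htail).congr_fun
    (fun x hx ↦ (torusGreen_eq_add_tail (FD_subset_ball hx)).symm) measurableSet_FD

lemma setIntegral_FD_torusGreen_mul_planeWave (n : Fin 4 → ℤ) :
    ∫ x in FD, (torusGreen x : ℂ) * planeWave (fun i ↦ (n i : ℝ)) x =
      (1 / (1 + (fun i ↦ (n i : ℝ)) ⬝ᵥ (fun i ↦ (n i : ℝ))) : ℝ) :=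
  (setIntegral_FD_periodization_mul_planeWave integrable_resolventKernel n).trans
    (integral_resolventKernel_mul_planeWave _)

lemma per_torusGreen : Per torusGreen := per_periodization _

lemma exists_add_lpt_mem_FD_diff_zero {x : Fin 4 → ℝ} (hx : x ∈ Sreg) :
    ∃ k, x + lpt k ∈ FD \ {0} := by
  obtain ⟨k, hk, -⟩ := existsUnique_add_lpt_mem_FD x
  refine ⟨k, hk, fun h0 ↦ hx (-k) ?_⟩
  rw [eq_neg_of_add_eq_zero_left h0, neg_eq_iff_add_eq_zero, ← lpt_add, add_neg_cancel, lpt_zero]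

lemma torusGreen_pos {x : Fin 4 → ℝ} (hx : x ∈ Sreg) : 0 < torusGreen x := by
  obtain ⟨k, hkFD, hk0⟩ := exists_add_lpt_mem_FD_diff_zero hx
  rw [← per_torusGreen x k, torusGreen_eq_add_tail (FD_subset_ball hkFD)]
  exact add_pos_of_pos_of_nonneg (resolventKernel_pos hk0) (torusGreenTail_nonneg _)

lemma continuousAt_torusGreen {x : Fin 4 → ℝ} (hx : x ∈ Metric.ball 0 (3 * π / 2)) (h0 : x ≠ 0) :
    ContinuousAt torusGreen x := by
  have hball : Metric.ball 0 (3 * π / 2) ∈ 𝓝 x := Metric.isOpen_ball.mem_nhds hx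
  refine ((continuousOn_resolventKernel.continuousAt (isOpen_compl_singleton.mem_nhds h0)).add
    (continuousOn_torusGreenTail.continuousAt hball)).congr ?_
  filter_upwards [hball] with y hy using (torusGreen_eq_add_tail hy).symm

lemma continuousOn_torusGreen : ContinuousOn torusGreen Sreg := by
  intro x hx
  obtain ⟨k, hkFD, hk0⟩ := exists_add_lpt_mem_FD_diff_zero hx
  have hcomp : ContinuousAt (fun y ↦ torusGreen (y + lpt k)) x :=
    (continuousAt_torusGreen (FD_subset_ball hkFD) hk0).comp_of_eq (by fun_prop) rfl
  exact (hcomp.congr (.of_forall fun y ↦ per_torusGreen y k)).continuousWithinAt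

lemma sq_le_sq_sub_two_pi_mul_int {a : ℝ} (ha : a ∈ Ioc (-π) π) (k : ℤ) :
    a ^ 2 ≤ (a - 2 * π * k) ^ 2 := by
  rcases eq_or_ne k 0 with rfl | hk
  · simp
  have hk1 : (1 : ℝ) ≤ |(k : ℝ)| := by exact_mod_cast Int.one_le_abs hk
  have habs : |a| ≤ π := abs_le.mpr ⟨ha.1.le, ha.2⟩
  have htriangle : |2 * π * k| - |a| ≤ |a - 2 * π * k| := by
    rw [abs_sub_comm]
    exact abs_sub_abs_le_abs_sub _ _
  rw [abs_mul, abs_of_pos two_pi_pos] at htriangle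
  exact sq_le_sq.mpr (by nlinarith [pi_pos])

lemma per_latDist : Per latDist := by
  intro x k
  refine (Equiv.iInf_congr (Equiv.addRight k) fun l ↦ ?_).symm
  simp only [Equiv.coe_addRight, lpt_add, add_sub_add_right_eq_sub]

lemma latDist_eq_sqrt {x : Fin 4 → ℝ} (hx : x ∈ FD) : latDist x = √(x ⬝ᵥ x) := by
  have henorm (y : Fin 4 → ℝ) : enorm4 y = √(y ⬝ᵥ y) := by simp only [enorm4, dotProduct, sq]
  refine le_antisymm ?_ (le_ciInf fun k ↦ ?_)
  · have hbdd : BddBelow (range fun k ↦ enorm4 (x - lpt k)) :=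
      ⟨0, forall_mem_range.mpr fun k ↦ sqrt_nonneg _⟩
    simpa only [latDist, henorm, lpt_zero, sub_zero] using ciInf_le hbdd 0
  · rw [← henorm]
    exact sqrt_le_sqrt (Finset.sum_le_sum fun i _ ↦ sq_le_sq_sub_two_pi_mul_int (hx i) (k i))

lemma dotProduct_self_le_of_mem_FD {x : Fin 4 → ℝ} (hx : x ∈ FD) : x ⬝ᵥ x ≤ 4 * π ^ 2 := by
  have hcoord (i : Fin 4) : x i * x i ≤ π ^ 2 := by
    rw [← sq]
    exact sq_le_sq' (hx i).1.le (hx i).2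
  simpa [dotProduct] using
    Finset.sum_le_card_nsmul Finset.univ (fun i ↦ x i * x i) _ fun i _ ↦ hcoord i

lemma exists_forall_abs_torusGreen_sub_le :
    ∃ C, ∀ x ∈ Sreg, |torusGreen x - 1 / (4 * π ^ 2 * latDist x ^ 2)
      - 1 / (8 * π ^ 2) * log (latDist x)| ≤ C := by
  obtain ⟨C₁, hC₁⟩ := exists_forall_abs_resolventKernel_sub_le (4 * π ^ 2)
  obtain ⟨C₂, hC₂⟩ := exists_forall_abs_torusGreenTail_le
  refine ⟨C₁ + C₂, fun x hx ↦ ?_⟩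
  obtain ⟨k, hkFD, hk0⟩ := exists_add_lpt_mem_FD_diff_zero hx
  rw [← per_torusGreen x k, ← per_latDist x k]
  generalize x + lpt k = y at hkFD hk0
  have hsplit : torusGreen y - 1 / (4 * π ^ 2 * latDist y ^ 2) -
      1 / (8 * π ^ 2) * log (latDist y) =
      resolventKernel y - 1 / (4 * π ^ 2 * (y ⬝ᵥ y)) - 1 / (16 * π ^ 2) * log (y ⬝ᵥ y) +
        torusGreenTail y := by
    rw [torusGreen_eq_add_tail (FD_subset_ball hkFD), latDist_eq_sqrt hkFD,
      sq_sqrt (dotProduct_self_nonneg y), log_sqrt (dotProduct_self_nonneg y)]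
    ring
  rw [hsplit]
  exact (abs_add_le _ _).trans (add_le_add (hC₁ y hk0 (dotProduct_self_le_of_mem_FD hkFD))
    (hC₂ y (FD_subset_ball hkFD)))

/-! ### Weak solutions -/

/-- `g` is a distributional solution of `(1 - Δ)g = δ₀` on the torus: testing against smooth
periodic functions, all derivatives fall on the test function. -/
def IsWeakGreenFunction (g : (Fin 4 → ℝ) → ℝ) : Prop :=
  ∀ φ : (Fin 4 → ℝ) → ℝ, ContDiff ℝ (⊤ : ℕ∞) φ → Per φ → ∫ x in FD, g x * (φ x - lap φ x) = φ 0

lemma fderiv_comp_dotProduct {ι : Type*} [Fintype ι] {f : ℝ → ℝ} (hf : Differentiable ℝ f)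
    (ξ x v : ι → ℝ) : fderiv ℝ (fun y ↦ f (ξ ⬝ᵥ y)) x v = deriv f (ξ ⬝ᵥ x) * (ξ ⬝ᵥ v) := by
  have hdot : HasFDerivAt (fun y : ι → ℝ ↦ ξ ⬝ᵥ y)
      (LinearMap.toContinuousLinearMap (dotProductBilin ℝ ℝ ξ)) x :=
    (LinearMap.toContinuousLinearMap (dotProductBilin ℝ ℝ ξ)).hasFDerivAt
  exact DFunLike.congr_fun ((hf _).hasDerivAt.comp_hasFDerivAt x hdot).fderiv v

lemma lap_comp_dotProduct {f : ℝ → ℝ} (hf : ContDiff ℝ 2 f) (ξ x : Fin 4 → ℝ) :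
    lap (fun y ↦ f (ξ ⬝ᵥ y)) x = (ξ ⬝ᵥ ξ) * deriv (deriv f) (ξ ⬝ᵥ x) := by
  have hf' : Differentiable ℝ (deriv f) := hf.differentiable_deriv_two
  have hdiff : DifferentiableAt ℝ (fun y ↦ deriv f (ξ ⬝ᵥ y)) x :=
    (hf' _).comp x (by unfold dotProduct; fun_prop)
  simp only [lap, fderiv_comp_dotProduct (hf.differentiable two_ne_zero), dotProduct_single_one]
  rw [dotProduct, Finset.sum_mul]
  refine Finset.sum_congr rfl fun i _ ↦ ?_
  rw [fderiv_mul_const hdiff, smul_apply, fderiv_comp_dotProduct hf',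
    dotProduct_single_one, smul_eq_mul]
  ring

section WeakSolution

variable {g : (Fin 4 → ℝ) → ℝ}

lemma IsWeakGreenFunction.setIntegral_mul_comp_dotProduct (hg : IsWeakGreenFunction g) {f : ℝ → ℝ}
    (hf : ContDiff ℝ (⊤ : ℕ∞) f) (hper : Function.Periodic f (2 * π))
    (hderiv : ∀ s, deriv (deriv f) s = -f s) (n : Fin 4 → ℤ) :
    ∫ x in FD, g x * f ((fun i ↦ (n i : ℝ)) ⬝ᵥ x) =
      f 0 / (1 + (fun i ↦ (n i : ℝ)) ⬝ᵥ (fun i ↦ (n i : ℝ))) := by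
  set ξ : Fin 4 → ℝ := fun i ↦ (n i : ℝ) with hξ
  have htest := hg (fun x ↦ f (ξ ⬝ᵥ x)) (hf.comp (by unfold dotProduct; fun_prop)) fun x k ↦ by
    obtain ⟨m, hm⟩ := exists_dotProduct_lpt_eq n k
    simp only [dotProduct_add, hξ, hm, hper.int_mul m _]
  have hintegrand (x : Fin 4 → ℝ) : g x * (f (ξ ⬝ᵥ x) - lap (fun y ↦ f (ξ ⬝ᵥ y)) x) =
      (1 + ξ ⬝ᵥ ξ) * (g x * f (ξ ⬝ᵥ x)) := by
    rw [lap_comp_dotProduct (contDiff_infty.mp hf 2), hderiv]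
    ring
  simp only [hintegrand, integral_const_mul, dotProduct_zero] at htest
  rw [eq_div_iff (by linarith [dotProduct_self_nonneg ξ]), mul_comm, htest]

lemma IsWeakGreenFunction.setIntegral_mul_planeWave (hg : IsWeakGreenFunction g)
    (hint : IntegrableOn g FD) (n : Fin 4 → ℤ) :
    ∫ x in FD, (g x : ℂ) * planeWave (fun i ↦ (n i : ℝ)) x =
      (1 / (1 + (fun i ↦ (n i : ℝ)) ⬝ᵥ (fun i ↦ (n i : ℝ))) : ℝ) := by
  have hcos := hg.setIntegral_mul_comp_dotProduct contDiff_cos cos_periodic (by simp) n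
  have hsin := hg.setIntegral_mul_comp_dotProduct contDiff_sin sin_periodic (by simp) n
  have hgC : Integrable (fun x ↦ (g x : ℂ)) (volume.restrict FD) := hint.ofReal
  rw [← integral_re_add_im (integrable_mul_planeWave hgC _)]
  simp only [planeWave, RCLike.re_to_complex, RCLike.im_to_complex, Complex.re_ofReal_mul,
    Complex.im_ofReal_mul, Complex.exp_ofReal_mul_I_re, Complex.exp_ofReal_mul_I_im, hcos, hsin]
  simp

lemma IsWeakGreenFunction.torusGreen_ae_eq (hg : IsWeakGreenFunction g) (hper : Per g)
    (hint : IntegrableOn g FD) : torusGreen =ᵐ[volume] g := by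
  refine ae_eq_of_ae_eq_restrict_FD per_torusGreen hper ?_
  have hgC : Integrable (fun x ↦ (g x : ℂ)) (volume.restrict FD) := hint.ofReal
  have htorusC : Integrable (fun x ↦ (torusGreen x : ℂ)) (volume.restrict FD) :=
    integrableOn_torusGreen.ofReal
  have hdiff : (fun x ↦ (torusGreen x : ℂ) - g x) =ᵐ[volume.restrict FD] 0 := by
    refine ae_eq_zero_of_forall_integral_mul_planeWave
      (ae_restrict_of_forall_mem measurableSet_FD fun x hx ↦ hx)
      (htorusC.sub hgC) fun n ↦ ?_
    simp only [sub_mul]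
    rw [integral_sub (integrable_mul_planeWave htorusC _) (integrable_mul_planeWave hgC _),
      setIntegral_FD_torusGreen_mul_planeWave, hg.setIntegral_mul_planeWave hint, sub_self]
  filter_upwards [hdiff] with x hx
  exact_mod_cast sub_eq_zero.mp hx

end WeakSolution

/-- Lemma `lem:G`: the Green's function `G` of `(1-Δ)` on `𝕋⁴`, i.e. the (periodic,
locally integrable) distributional solution of `(1-Δ)G = δ₀`, is continuous and strictly
positive on `𝕋⁴ \ {0}` (after modification on a null set), and
`sup_{x ≠ 0} |G(x) - 1/(4π²|x|²) - (1/(8π²)) log|x|| < ∞`. -/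
theorem stmt8 (g : (Fin 4 → ℝ) → ℝ) (hper : Per g) (hint : IntegrableOn g FD volume)
    (hweak : ∀ φ : (Fin 4 → ℝ) → ℝ, ContDiff ℝ (⊤ : ℕ∞) φ → Per φ →
      ∫ x in FD, g x * (φ x - lap φ x) = φ 0) :
    ∃ g' : (Fin 4 → ℝ) → ℝ, g' =ᵐ[volume] g ∧ Per g' ∧
      ContinuousOn g' Sreg ∧ (∀ x ∈ Sreg, 0 < g' x) ∧
      ∃ C : ℝ, ∀ x ∈ Sreg,
        |g' x - 1 / (4 * Real.pi ^ 2 * latDist x ^ 2)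
            - (1 / (8 * Real.pi ^ 2)) * Real.log (latDist x)| ≤ C := by
  have hg : IsWeakGreenFunction g := hweak
  exact ⟨torusGreen, hg.torusGreen_ae_eq hper hint, per_torusGreen, continuousOn_torusGreen,
    fun _ hx ↦ torusGreen_pos hx, exists_forall_abs_torusGreen_sub_le⟩

end
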